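/- arXiv:math/0205055 — 2 statements merged into one kernel-verified Lean document; each statement's English description precedes it below -/
import Mathlib

section
/- For nonnegative integers i, j, the q-series identity ∑_{a+ab=i, b+ab=j} q^{T_{a+b+ab} + T_{ab}} / ((q)_a (q)_b (q)_{ab}) = q^{T_i + T_j} / ((q)_i (q)_j) holds as an identity of formal power series in q, where the sum is over nonnegative integers a, b, ab satisfying the two constraints. -/
/-!
Multiplying by `(q)_i (q)_j` turns the identity into a `q`-Vandermonde sum for Gaussian binomials,
`∑_c q^{(i-c)(j-c)} [i, c] [j, c] (q)_c = 1`, because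
`T_{a+b+c} + T_c = T_{a+c} + T_{b+c} + ab`. In this form it holds over every commutative ring, by
induction on `j`: the `q`-Pascal rule for `[j+1, c]` splits the sum for `j + 1` so that the `c`-th
summand for `j` reappears twice, with weights `q^{i-c}` and `1 - q^{i-c}`.
-/

open PowerSeries Finset

/-- Triangular number `T n = n(n+1)/2`. -/
def tri (n : ℕ) : ℕ := n * (n + 1) / 2

/-- The `q`-Pochhammer symbol `(q)_n = ∏_{j=1}^n (1 - q^j)` as a formal power
series in `q` over `ℚ`. -/
noncomputable def qPoch (n : ℕ) : PowerSeries ℚ :=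
  ∏ j ∈ Finset.range n, (1 - (PowerSeries.X : PowerSeries ℚ) ^ (j + 1))

theorem two_mul_tri (n : ℕ) : 2 * tri n = n * (n + 1) :=
  Nat.mul_div_cancel' (Nat.even_mul_succ_self n).two_dvd

theorem tri_add_add_add_tri (a b c : ℕ) :
    tri (a + b + c) + tri c = tri (a + c) + tri (b + c) + a * b := by
  have h₁ := two_mul_tri (a + b + c)
  have h₂ := two_mul_tri c
  have h₃ := two_mul_tri (a + c)
  have h₄ := two_mul_tri (b + c)
  linarith

section CommRing

variable {R : Type*} [CommRing R] (q : R)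

/-- The `q`-Pochhammer symbol `(q)_n` of an element `q` of a commutative ring. The symbol `qPoch` is
the case `q = X` in `ℚ⟦X⟧`. -/
def qPochhammer (n : ℕ) : R :=
  ∏ j ∈ range n, (1 - q ^ (j + 1))

/-- The Gaussian binomial coefficient `[n, k]`, defined without division by the `q`-Pascal rule.
The subtraction in the exponent truncates only for `n < k`, where `[n, k] = 0`. -/
def gaussBinom : ℕ → ℕ → R
  | _, 0 => 1
  | 0, _ + 1 => 0
  | n + 1, k + 1 => q ^ (n - k) * gaussBinom n k + gaussBinom n (k + 1)

@[simp]
theorem qPochhammer_zero : qPochhammer q 0 = 1 :=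
  prod_range_zero _

theorem qPochhammer_succ (n : ℕ) :
    qPochhammer q (n + 1) = qPochhammer q n * (1 - q ^ (n + 1)) :=
  prod_range_succ _ n

@[simp]
theorem gaussBinom_zero_right (n : ℕ) : gaussBinom q n 0 = 1 := by
  cases n <;> rfl

theorem gaussBinom_succ_succ (n k : ℕ) :
    gaussBinom q (n + 1) (k + 1) = q ^ (n - k) * gaussBinom q n k + gaussBinom q n (k + 1) :=
  rfl

theorem gaussBinom_eq_zero_of_lt {n k : ℕ} (h : n < k) : gaussBinom q n k = 0 := by
  induction n generalizing k with
  | zero => obtain ⟨k, rfl⟩ := Nat.exists_eq_add_one_of_ne_zero h.ne'; rfl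
  | succ n ih =>
    obtain ⟨k, rfl⟩ := Nat.exists_eq_add_one_of_ne_zero (Nat.ne_zero_of_lt h)
    rw [gaussBinom_succ_succ, ih (by lia), ih (by lia), mul_zero, add_zero]

theorem gaussBinom_succ_right_mul (n k : ℕ) :
    gaussBinom q n (k + 1) * (1 - q ^ (k + 1)) = gaussBinom q n k * (1 - q ^ (n - k)) := by
  induction n generalizing k with
  | zero => simp [gaussBinom]
  | succ n ih =>
    have pascal_mul : gaussBinom q (n + 1) (k + 1) * (1 - q ^ (k + 1)) =
        gaussBinom q n k * (1 - q ^ (n - k) * q ^ (k + 1)) := by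
      rw [gaussBinom_succ_succ]
      linear_combination ih k
    rw [pascal_mul]
    rcases lt_or_ge n k with hnk | hkn
    · simp [gaussBinom_eq_zero_of_lt q hnk, Nat.sub_eq_zero_of_le hnk]
    rw [← pow_add, show n - k + (k + 1) = n + 1 by lia]
    cases k with
    | zero => simp
    | succ k =>
      rw [gaussBinom_succ_succ, show n + 1 - (k + 1) = n - k by lia]
      have hpow : q ^ (n - k) * q ^ (k + 1) = q ^ (n + 1) := by
        rw [← pow_add, show n - k + (k + 1) = n + 1 by lia]
      linear_combination q ^ (n - k) * ih k + gaussBinom q n (k + 1) * hpow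

theorem gaussBinom_mul_qPochhammer_succ (n k : ℕ) :
    gaussBinom q n (k + 1) * qPochhammer q (k + 1) =
      gaussBinom q n k * qPochhammer q k * (1 - q ^ (n - k)) := by
  rw [qPochhammer_succ]
  linear_combination qPochhammer q k * gaussBinom_succ_right_mul q n k

theorem gaussBinom_add_mul_qPochhammer_mul_qPochhammer (a b : ℕ) :
    gaussBinom q (a + b) b * qPochhammer q b * qPochhammer q a = qPochhammer q (a + b) := by
  induction b generalizing a with
  | zero => simp
  | succ b ih =>
    rw [gaussBinom_mul_qPochhammer_succ, show a + (b + 1) - b = a + 1 by lia,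
      show a + (b + 1) = a + 1 + b by lia, ← ih (a + 1), qPochhammer_succ]
    ring

/-- The summand `q^{(i-c)(j-c)} [i, c] [j, c] (q)_c` of the `q`-Vandermonde sum. The exponent is
meaningful for `c ≤ min i j`; for larger `c` the summand vanishes. -/
def vandermondeTerm (i j c : ℕ) : R :=
  q ^ ((i - c) * (j - c)) * (gaussBinom q i c * qPochhammer q c * gaussBinom q j c)

theorem vandermondeTerm_eq_zero_of_left_lt {i c : ℕ} (j : ℕ) (h : i < c) :
    vandermondeTerm q i j c = 0 := by
  simp [vandermondeTerm, gaussBinom_eq_zero_of_lt q h]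

theorem vandermondeTerm_eq_zero_of_right_lt (i : ℕ) {j c : ℕ} (h : j < c) :
    vandermondeTerm q i j c = 0 := by
  simp [vandermondeTerm, gaussBinom_eq_zero_of_lt q h]

theorem vandermondeTerm_succ_zero (i j : ℕ) :
    vandermondeTerm q i (j + 1) 0 = q ^ i * vandermondeTerm q i j 0 := by
  simp only [vandermondeTerm, gaussBinom_zero_right, Nat.sub_zero]
  ring

theorem vandermondeTerm_succ_succ {j c : ℕ} (i : ℕ) (hcj : c ≤ j) :
    vandermondeTerm q i (j + 1) (c + 1) =
      (1 - q ^ (i - c)) * vandermondeTerm q i j c +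
        q ^ (i - (c + 1)) * vandermondeTerm q i j (c + 1) := by
  rcases le_or_gt i c with hic | hci
  · simp [vandermondeTerm_eq_zero_of_left_lt q _ (Nat.lt_succ_of_le hic),
      Nat.sub_eq_zero_of_le hic]
  obtain ⟨a, rfl⟩ := Nat.exists_eq_add_of_le hci
  obtain ⟨b, rfl⟩ := Nat.exists_eq_add_of_le hcj
  simp only [vandermondeTerm, gaussBinom_succ_succ, gaussBinom_mul_qPochhammer_succ]
  rw [show c + 1 + a - (c + 1) = a by lia, show c + 1 + a - c = a + 1 by lia,
    show c + b + 1 - (c + 1) = b by lia, show c + b - c = b by lia]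
  cases b with
  | zero =>
    rw [gaussBinom_eq_zero_of_lt q (show c + 0 < c + 1 by lia)]
    ring
  | succ b =>
    rw [show c + (b + 1) - (c + 1) = b by lia]
    ring

theorem sum_vandermondeTerm_succ (i j : ℕ) :
    ∑ c ∈ range (j + 2), vandermondeTerm q i (j + 1) c =
      ∑ c ∈ range (j + 1), vandermondeTerm q i j c := by
  have hshift : ∑ c ∈ range (j + 1), q ^ (i - (c + 1)) * vandermondeTerm q i j (c + 1) +
      q ^ i * vandermondeTerm q i j 0 =
        ∑ c ∈ range (j + 1), q ^ (i - c) * vandermondeTerm q i j c := by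
    have h := sum_range_succ' (fun c ↦ q ^ (i - c) * vandermondeTerm q i j c) (j + 1)
    rw [sum_range_succ, vandermondeTerm_eq_zero_of_right_lt q i j.lt_succ_self, mul_zero,
      add_zero] at h
    exact h.symm
  calc
    ∑ c ∈ range (j + 2), vandermondeTerm q i (j + 1) c
    _ = ∑ c ∈ range (j + 1), vandermondeTerm q i (j + 1) (c + 1) +
          q ^ i * vandermondeTerm q i j 0 := by
      rw [sum_range_succ', vandermondeTerm_succ_zero]
    _ = ∑ c ∈ range (j + 1), (1 - q ^ (i - c)) * vandermondeTerm q i j c +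
          ∑ c ∈ range (j + 1), q ^ (i - c) * vandermondeTerm q i j c := by
      rw [← hshift, ← add_assoc, ← sum_add_distrib]
      congr 1
      exact sum_congr rfl fun c hc ↦
        vandermondeTerm_succ_succ q i (Nat.le_of_lt_succ (mem_range.mp hc))
    _ = ∑ c ∈ range (j + 1), vandermondeTerm q i j c := by
      rw [← sum_add_distrib]
      exact sum_congr rfl fun c _ ↦ by ring

theorem sum_vandermondeTerm (i j : ℕ) :
    ∑ c ∈ range (j + 1), vandermondeTerm q i j c = 1 := by
  induction j with
  | zero => simp [vandermondeTerm]
  | succ j ih => rw [sum_vandermondeTerm_succ, ih]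

variable {q}

theorem vandermondeTerm_mul_inv {w : ℕ → R} (hw : ∀ n, qPochhammer q n * w n = 1) (a b c : ℕ) :
    vandermondeTerm q (a + c) (b + c) c * (w (a + c) * w (b + c)) =
      q ^ (a * b) * (w a * w b * w c) := by
  have gaussBinom_mul_inv (m : ℕ) : gaussBinom q (m + c) c * w (m + c) = w m * w c := by
    have h := gaussBinom_add_mul_qPochhammer_mul_qPochhammer q m c
    linear_combination w m * w c * w (m + c) * h + w m * w c * hw (m + c)
      - gaussBinom q (m + c) c * w (m + c) * (w m * qPochhammer q m * hw c + hw m)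
  calc
    vandermondeTerm q (a + c) (b + c) c * (w (a + c) * w (b + c))
    _ = q ^ (a * b) * ((gaussBinom q (a + c) c * w (a + c)) *
          (gaussBinom q (b + c) c * w (b + c)) * qPochhammer q c) := by
      simp only [vandermondeTerm, Nat.add_sub_cancel]
      ring
    _ = q ^ (a * b) * (w a * w b * w c) := by
      rw [gaussBinom_mul_inv, gaussBinom_mul_inv]
      linear_combination q ^ (a * b) * w a * w b * w c * hw c

theorem alladi_gordon_key_identity_general {w : ℕ → R}
    (hw : ∀ n, qPochhammer q n * w n = 1) (i j : ℕ) :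
    ∑ t ∈ (range (i + 1) ×ˢ range (j + 1) ×ˢ range (i + 1)).filter
        (fun t : ℕ × ℕ × ℕ ↦ t.1 + t.2.2 = i ∧ t.2.1 + t.2.2 = j),
      q ^ (tri (t.1 + t.2.1 + t.2.2) + tri t.2.2) * (w t.1 * w t.2.1 * w t.2.2) =
    q ^ (tri i + tri j) * (w i * w j) := by
  rw [← one_mul (w i * w j), ← sum_vandermondeTerm q i j, sum_mul, mul_sum]
  refine sum_of_injOn (fun t ↦ t.2.2) ?_ ?_ ?_ ?_
  · rintro ⟨a, b, c⟩ ht ⟨a', b', c'⟩ ht' hcc'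
    simp only [coe_filter, Set.mem_ofPred_eq, Prod.mk.injEq] at ht ht' hcc' ⊢
    lia
  · rintro ⟨a, b, c⟩ ht
    simp only [coe_filter, Set.mem_ofPred_eq, coe_range, Set.mem_Iio] at ht ⊢
    lia
  · intro c hc hc_image
    have hic : i < c := by
      by_contra! hci
      refine hc_image ⟨(i - c, j - c, c), ?_, rfl⟩
      simp only [coe_filter, Set.mem_ofPred_eq, mem_product, mem_range] at hc ⊢
      lia
    rw [vandermondeTerm_eq_zero_of_left_lt q j hic, zero_mul, mul_zero]
  · rintro ⟨a, b, c⟩ ht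
    obtain ⟨-, rfl, rfl⟩ := mem_filter.mp ht
    rw [vandermondeTerm_mul_inv hw, tri_add_add_add_tri, pow_add, mul_assoc]

end CommRing

theorem qPoch_mul_inv_cancel (n : ℕ) : qPoch n * (qPoch n)⁻¹ = 1 :=
  PowerSeries.mul_inv_cancel _ (by simp [qPoch, map_prod])

/-- For nonnegative integers `i, j`:
`∑_{a+ab=i, b+ab=j} q^{T_{a+b+ab}+T_{ab}} / ((q)_a (q)_b (q)_{ab})
  = q^{T_i+T_j} / ((q)_i (q)_j)` as formal power series in `q`. -/
theorem alladi_gordon_key_identity (i j : ℕ) :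
    ∑ t ∈ (Finset.range (i + 1) ×ˢ Finset.range (j + 1) ×ˢ
        Finset.range (i + 1)).filter
        (fun t : ℕ × ℕ × ℕ => t.1 + t.2.2 = i ∧ t.2.1 + t.2.2 = j),
      (PowerSeries.X : PowerSeries ℚ) ^ (tri (t.1 + t.2.1 + t.2.2) + tri t.2.2) *
        (qPoch t.1 * qPoch t.2.1 * qPoch t.2.2)⁻¹
    = (PowerSeries.X : PowerSeries ℚ) ^ (tri i + tri j) * (qPoch i * qPoch j)⁻¹ := by
  have mul_inv (f g : PowerSeries ℚ) : (f * g)⁻¹ = f⁻¹ * g⁻¹ := by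
    rw [PowerSeries.mul_inv_rev, mul_comm]
  simp only [mul_inv]
  exact alladi_gordon_key_identity_general qPoch_mul_inv_cancel i j
end

section
/- The number of partitions of n into distinct parts congruent to 2, 4, or 5 mod 6 equals the number of partitions of n into parts, none equal to 1 or 3, with minimal difference 6 between parts, where difference exactly 6 is allowed only if the larger part is congruent to 2, 4, or 5 mod 6. -/
open Nat

/-!
Give a part `≡ 2, 4, 5 (mod 6)` one of the *primary colours* `a, b, c` and a part
`≡ 0, 1, 3 (mod 6)` one of the *secondary colours* `ab, ac, bc`. Since `2 + 4 = 6`, `2 + 5 = 7` and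
`4 + 5 = 9`, the parts `1` and `3` are exactly those that no colour accounts for. Replacing `x ^ i`
by a weight recording the colour of `i` turns the partitions satisfying the difference conditions
with parts at most `6 * n - 1` into a polynomial `Gₙ(A, B, C; q)`, and those with parts at most
`6 * n + 2` into `Hₙ(A, B, C; q)`.

Adding a largest part one residue at a time gives a recurrence for `Gₙ` whose coefficients are
symmetric in `A, B, C`, and the same recurrence with `A * q` in place of `A` for `Hₙ`. Hence
`Gₙ(A, B, C) = Gₙ(B, C, A)` and `Hₙ(A, B, C) = (1 + A) Gₙ(A * q, B, C)`. When `q` is nilpotent and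
`n` is large, the parts between `6 * n` and `6 * n + 2` have weight zero, so `Gₙ = Hₙ`. Iterating
extracts the factors `1 + A * q ^ k`, and by symmetry those of `B` and `C`, which leaves
`Gₙ(0, 0, 0) = 1`. Taking `x` to be the class of `X` in `ℤ[X] ⧸ (X ^ N)` and
`(A, B, C, q) = (x ^ 2, x ^ 4, x ^ 5, x ^ 6)` compares the numbers of partitions of every `n < N`.
-/

namespace Gollnitz

open Finset

section GappedSum

variable {R : Type*} [CommSemiring R]

/-- Sets in which every element `y` exceeds each smaller element by at least `gap y`. -/
abbrev IsGapped (gap : ℕ → ℕ) (s : Finset ℕ) : Prop :=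
  ∀ x ∈ s, ∀ y ∈ s, x < y → x + gap y ≤ y

/-- The weighted count of the sets of positive integers at most `k` with prescribed gaps; a weight
`0` forbids a part. -/
def gappedSum (gap : ℕ → ℕ) (w : ℕ → R) (k : ℕ) : R :=
  ∑ s ∈ (Icc 1 k).powerset with IsGapped gap s, ∏ i ∈ s, w i

@[simp]
lemma gappedSum_zero (gap : ℕ → ℕ) (w : ℕ → R) : gappedSum gap w 0 = 1 := by
  simp [gappedSum, sum_filter]

lemma isGapped_insert {gap : ℕ → ℕ} {s : Finset ℕ} {m : ℕ} (hs : ∀ i ∈ s, i < m) :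
    IsGapped gap (insert m s) ↔ IsGapped gap s ∧ ∀ i ∈ s, i + gap m ≤ m := by
  simp only [IsGapped, forall_mem_insert]
  constructor
  · rintro ⟨-, h⟩
    exact ⟨fun x hx ↦ (h x hx).2, fun x hx ↦ (h x hx).1 (hs x hx)⟩
  · rintro ⟨h, hm⟩
    exact ⟨⟨fun h ↦ absurd h (lt_irrefl m), fun y hy hmy ↦ absurd (hs y hy) hmy.not_gt⟩,
      fun x hx ↦ ⟨fun _ ↦ hm x hx, h x hx⟩⟩

lemma gappedSum_succ {gap : ℕ → ℕ} (w : ℕ → R) {k : ℕ} (hgap : 0 < gap (k + 1)) :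
    gappedSum gap w (k + 1) =
      gappedSum gap w k + w (k + 1) * gappedSum gap w (k + 1 - gap (k + 1)) := by
  have hk : k + 1 ∉ Icc 1 k := by simp
  have hlt {s : Finset ℕ} (hs : s ⊆ Icc 1 k) : ∀ i ∈ s, i < k + 1 :=
    fun i hi ↦ Nat.lt_succ_of_le (mem_Icc.1 (hs hi)).2
  have hfilter : {s ∈ (Icc 1 k).powerset | IsGapped gap (insert (k + 1) s)} =
      {s ∈ (Icc 1 (k + 1 - gap (k + 1))).powerset | IsGapped gap s} := by
    ext s
    simp only [mem_filter, mem_powerset]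
    constructor
    · rintro ⟨hs, h⟩
      rw [isGapped_insert (hlt hs)] at h
      refine ⟨fun i hi ↦ mem_Icc.2 ⟨(mem_Icc.1 (hs hi)).1, ?_⟩, h.1⟩
      exact Nat.le_sub_of_add_le (h.2 i hi)
    · rintro ⟨hs, h⟩
      have hs' : s ⊆ Icc 1 k := hs.trans (Icc_subset_Icc_right (by omega))
      refine ⟨hs', (isGapped_insert (hlt hs')).2 ⟨h, fun i hi ↦ ?_⟩⟩
      have := mem_Icc.1 (hs hi)
      omega
  rw [gappedSum, ← insert_Icc_right_eq_Icc_add_one (by omega), sum_filter, sum_powerset_insert hk,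
    ← sum_filter, ← sum_filter, hfilter, gappedSum, gappedSum, mul_sum]
  congr 1
  refine sum_congr rfl fun s hs ↦ prod_insert fun hmem ↦ ?_
  have := mem_Icc.1 (mem_powerset.1 (mem_filter.1 hs).1 hmem)
  omega

lemma gappedSum_zero_weight (gap : ℕ → ℕ) (k : ℕ) : gappedSum gap (0 : ℕ → R) k = 1 := by
  rw [gappedSum, sum_eq_single_of_mem ∅ (by simp [IsGapped]), prod_empty]
  intro s _ hs
  obtain ⟨i, hi⟩ := nonempty_iff_ne_empty.2 hs
  exact prod_eq_zero hi rfl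

end GappedSum

/-- The parts of a primary colour: those allowed on the product side. -/
abbrev IsPrimary (i : ℕ) : Prop := i % 6 = 2 ∨ i % 6 = 4 ∨ i % 6 = 5

/-- The least difference allowed between the part `y` and a smaller part. -/
def minGap (y : ℕ) : ℕ := if IsPrimary y then 6 else 7

lemma minGap_pos (y : ℕ) : 0 < minGap y := by
  unfold minGap
  split_ifs <;> simp

lemma add_minGap_le_iff {x y : ℕ} (hxy : x < y) :
    x + minGap y ≤ y ↔ 6 ≤ y - x ∧ (y - x = 6 → IsPrimary y) := by
  unfold minGap
  split_ifs <;> omega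

section ColorWeight

variable {R : Type*} [CommSemiring R]

/-- The weight of the part `i`: `2, 4, 5` have weights `A, B, C`, the smallest parts `6 = 2 + 4`,
`7 = 2 + 5`, `9 = 4 + 5` of the secondary colours have the product weights, and raising a part by
`6` multiplies its weight by `q`. The forbidden parts `1` and `3` get weight `0`. -/
def colorWeight (A B C q : R) : ℕ → R
  | 0 | 1 | 3 => 0
  | 2 => A
  | 4 => B
  | 5 => C
  | 6 => A * B
  | 7 => A * C
  | 9 => B * C
  | i + 6 => q * colorWeight A B C q i

variable (A B C q : R)

lemma colorWeight_add_six {i : ℕ} (h₀ : i ≠ 0) (h₁ : i ≠ 1) (h₃ : i ≠ 3) :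
    colorWeight A B C q (i + 6) = q * colorWeight A B C q i := by
  rw [colorWeight] <;> simpa

lemma colorWeight_six_mul_add {r : ℕ} (h₀ : r ≠ 0) (h₁ : r ≠ 1) (h₃ : r ≠ 3) (n : ℕ) :
    colorWeight A B C q (6 * n + r) = colorWeight A B C q r * q ^ n := by
  induction n with
  | zero => simp
  | succ n ih =>
    rw [show 6 * (n + 1) + r = 6 * n + r + 6 by ring,
      colorWeight_add_six A B C q (by omega) (by omega) (by omega), ih]
    ring

lemma colorWeight_zero : colorWeight 0 0 0 q = 0 := by
  funext i
  fun_induction colorWeight <;> simp_all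

lemma colorWeight_pow (x : R) {i : ℕ} (hi : i ≠ 0) :
    colorWeight (x ^ 2) (x ^ 4) (x ^ 5) (x ^ 6) i = if i ≠ 1 ∧ i ≠ 3 then x ^ i else 0 := by
  fun_induction colorWeight (x ^ 2) (x ^ 4) (x ^ 5) (x ^ 6) i with
  | case10 i h₀ h₁ h₃ ih =>
    rw [ih h₀, if_pos ⟨h₁, h₃⟩, ← pow_add, add_comm]
    exact (if_pos (by omega)).symm
  | case1 => exact absurd rfl hi
  | _ => simp [← pow_add]

end ColorWeight

section GollnitzSum

variable {R : Type*} [CommSemiring R]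

/-- The weighted count of the sets of parts at most `k` that satisfy the difference conditions. -/
def gollnitzSum (A B C q : R) (k : ℕ) : R := gappedSum minGap (colorWeight A B C q) k

/-- The sum `Gₙ`, in which the largest admissible part `6 * n - 1` has the primary colour `c`.
Truncated subtraction gives `G₀ = 1`, the contribution of the empty set. -/
def gollnitzG (A B C q : R) (n : ℕ) : R := gollnitzSum A B C q (6 * n - 1)

/-- The sum `Hₙ`, in which the largest admissible part `6 * n + 2` has the primary colour `a`. -/
def gollnitzH (A B C q : R) (n : ℕ) : R := gollnitzSum A B C q (6 * n + 2)

variable (A B C q : R)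

lemma gollnitzSum_succ_of_isPrimary {r : ℕ} (hr : IsPrimary (r + 1)) (n : ℕ) :
    gollnitzSum A B C q (6 * n + r + 1) = gollnitzSum A B C q (6 * n + r) +
      colorWeight A B C q (r + 1) * q ^ n * gollnitzSum A B C q (6 * n + r - 5) := by
  have h := gappedSum_succ (colorWeight A B C q) (minGap_pos (6 * n + r + 1))
  rwa [minGap, if_pos (by omega), Nat.add_sub_add_right _ 1 5, add_assoc (6 * n),
    colorWeight_six_mul_add A B C q (by omega) (by omega) (by omega)] at h

lemma gollnitzSum_succ_of_not_isPrimary {r : ℕ} (hr : ¬ IsPrimary (r + 1)) (h₀ : r ≠ 0) (h₂ : r ≠ 2)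
    (n : ℕ) :
    gollnitzSum A B C q (6 * n + r + 1) = gollnitzSum A B C q (6 * n + r) +
      colorWeight A B C q (r + 1) * q ^ n * gollnitzSum A B C q (6 * n + r - 6) := by
  have h := gappedSum_succ (colorWeight A B C q) (minGap_pos (6 * n + r + 1))
  rwa [minGap, if_neg (by omega), Nat.add_sub_add_right _ 1 6, add_assoc (6 * n),
    colorWeight_six_mul_add A B C q (by omega) (by omega) (by omega)] at h

lemma gollnitzSum_succ_of_colorWeight_eq_zero {k : ℕ} (hk : colorWeight A B C q (k + 1) = 0) :
    gollnitzSum A B C q (k + 1) = gollnitzSum A B C q k := by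
  rw [gollnitzSum, gappedSum_succ _ (minGap_pos (k + 1)), hk, zero_mul, add_zero, gollnitzSum]

lemma gollnitzSum_add_six (n : ℕ) :
    gollnitzSum A B C q (6 * n + 6) =
      gollnitzG A B C q (n + 1) + A * B * q ^ n * gollnitzG A B C q n :=
  gollnitzSum_succ_of_not_isPrimary A B C q (r := 5) (by decide) (by decide) (by decide) n

lemma gollnitzSum_add_ten (n : ℕ) :
    gollnitzSum A B C q (6 * n + 10) = gollnitzH A B C q (n + 1) +
      B * C * q ^ n * gollnitzH A B C q n + B * q ^ (n + 1) * gollnitzSum A B C q (6 * n + 4) := by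
  have h₉ : gollnitzSum A B C q (6 * n + 9) =
      gollnitzH A B C q (n + 1) + B * C * q ^ n * gollnitzH A B C q n :=
    gollnitzSum_succ_of_not_isPrimary A B C q (r := 8) (by decide) (by decide) (by decide) n
  rw [← h₉]
  exact gollnitzSum_succ_of_isPrimary A B C q (r := 3) (by decide) (n + 1)

lemma gollnitzH_succ (n : ℕ) :
    gollnitzH A B C q (n + 1) = gollnitzSum A B C q (6 * n + 6) +
      A * C * q ^ n * gollnitzSum A B C q (6 * n) + A * q ^ (n + 1) * gollnitzH A B C q n := by
  have h₇ : gollnitzSum A B C q (6 * n + 7) =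
      gollnitzSum A B C q (6 * n + 6) + A * C * q ^ n * gollnitzSum A B C q (6 * n) :=
    gollnitzSum_succ_of_not_isPrimary A B C q (r := 6) (by decide) (by decide) (by decide) n
  rw [← h₇]
  exact gollnitzSum_succ_of_isPrimary A B C q (r := 1) (by decide) (n + 1)

lemma gollnitzG_zero : gollnitzG A B C q 0 = 1 := gappedSum_zero _ _

lemma gollnitzH_zero : gollnitzH A B C q 0 = 1 + A := by
  have h₁ : gollnitzSum A B C q 1 = 1 :=
    (gollnitzSum_succ_of_colorWeight_eq_zero A B C q rfl).trans (gappedSum_zero _ _)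
  have h₂ : gollnitzH A B C q 0 = gollnitzSum A B C q 1 + A * q ^ 0 * gollnitzG A B C q 0 :=
    gollnitzSum_succ_of_isPrimary A B C q (r := 1) (by decide) 0
  rw [h₂, h₁, gollnitzG_zero]
  ring

lemma gollnitzG_one : gollnitzG A B C q 1 = 1 + A + B + C := by
  have h₃ : gollnitzSum A B C q 3 = 1 + A :=
    (gollnitzSum_succ_of_colorWeight_eq_zero A B C q rfl).trans (gollnitzH_zero A B C q)
  have h₄ : gollnitzSum A B C q 4 = gollnitzSum A B C q 3 + B * q ^ 0 * gollnitzG A B C q 0 :=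
    gollnitzSum_succ_of_isPrimary A B C q (r := 3) (by decide) 0
  have h₅ : gollnitzG A B C q 1 = gollnitzSum A B C q 4 + C * q ^ 0 * gollnitzG A B C q 0 :=
    gollnitzSum_succ_of_isPrimary A B C q (r := 4) (by decide) 0
  rw [h₅, h₄, h₃, gollnitzG_zero]
  ring

lemma gollnitzH_one : gollnitzH A B C q 1 = (1 + A) * (1 + A * q + B + C) := by
  have h₆ := gollnitzSum_add_six A B C q 0
  rw [gollnitzH_succ, h₆, gollnitzH_zero, gollnitzG_one, gollnitzG_zero, gollnitzSum, mul_zero,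
    gappedSum_zero]
  ring

end GollnitzSum

section SymmetricRecurrence

variable {R : Type*} [CommRing R]

/-- The fourth-order recurrence satisfied by `Gₙ`, symmetric in the colours: `e₁, e₂, e₃` are the
elementary symmetric functions of their weights. -/
def IsSymmetricRecurrence (e₁ e₂ e₃ q : R) (u : ℕ → R) : Prop :=
  ∀ n, u (n + 4) = (1 + e₁ * q ^ (n + 3)) * u (n + 3)
    + e₂ * q ^ (n + 2) * (1 - q ^ (n + 3)) * u (n + 2)
    + e₃ * q ^ (2 * n + 3) * (e₁ + q ^ (n + 3)) * u (n + 1)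
    + e₃ ^ 2 * q ^ (3 * n + 3) * u n

lemma IsSymmetricRecurrence.const_mul {e₁ e₂ e₃ q : R} {u : ℕ → R}
    (hu : IsSymmetricRecurrence e₁ e₂ e₃ q u) (c : R) :
    IsSymmetricRecurrence e₁ e₂ e₃ q (fun n ↦ c * u n) := fun n ↦ by
  linear_combination c * hu n

lemma IsSymmetricRecurrence.eq_of_initial_eq {e₁ e₂ e₃ q : R} {u v : ℕ → R}
    (hu : IsSymmetricRecurrence e₁ e₂ e₃ q u) (hv : IsSymmetricRecurrence e₁ e₂ e₃ q v)
    (h₀ : u 0 = v 0) (h₁ : u 1 = v 1) (h₂ : u 2 = v 2) (h₃ : u 3 = v 3) (n : ℕ) : u n = v n := by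
  induction n using Nat.strong_induction_on with
  | _ n ih =>
    match n with
    | 0 => exact h₀
    | 1 => exact h₁
    | 2 => exact h₂
    | 3 => exact h₃
    | n + 4 =>
      rw [hu n, hv n, ih n (by omega), ih (n + 1) (by omega), ih (n + 2) (by omega),
        ih (n + 3) (by omega)]

end SymmetricRecurrence

section GollnitzRecurrence

variable {R : Type*} [CommRing R] (A B C q : R)

lemma gollnitzSum_add_four (n : ℕ) :
    gollnitzSum A B C q (6 * n + 4) =
      gollnitzG A B C q (n + 1) - C * q ^ n * gollnitzG A B C q n :=
  eq_sub_of_add_eq (gollnitzSum_succ_of_isPrimary A B C q (r := 4) (by decide) n).symm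

lemma gollnitzG_add_two (n : ℕ) :
    gollnitzG A B C q (n + 2) = (B + C) * q ^ (n + 1) * gollnitzG A B C q (n + 1)
      - B * C * q ^ (2 * n + 1) * gollnitzG A B C q n
      + gollnitzH A B C q (n + 1) + B * C * q ^ n * gollnitzH A B C q n := by
  have h : gollnitzG A B C q (n + 2) - C * q ^ (n + 1) * gollnitzG A B C q (n + 1) = _ :=
    (gollnitzSum_add_four A B C q (n + 1)).symm.trans (gollnitzSum_add_ten A B C q n)
  rw [gollnitzSum_add_four] at h
  linear_combination h

lemma gollnitzH_add_two (n : ℕ) :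
    gollnitzH A B C q (n + 2) = A * q ^ (n + 2) * gollnitzH A B C q (n + 1)
      + gollnitzG A B C q (n + 2) + A * (B + C) * q ^ (n + 1) * gollnitzG A B C q (n + 1)
      + A ^ 2 * B * C * q ^ (2 * n + 1) * gollnitzG A B C q n := by
  have h := gollnitzH_succ A B C q (n + 1)
  rw [gollnitzSum_add_six, Nat.mul_add_one 6 n, gollnitzSum_add_six] at h
  linear_combination h

lemma isSymmetricRecurrence_gollnitzG :
    IsSymmetricRecurrence (A + B + C) (A * B + B * C + C * A) (A * B * C) q
      (gollnitzG A B C q) := fun n ↦ by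
  -- Subtracting `A * q ^ (n + 3)` times the preceding relation groups the terms in `H` into
  -- differences `H (m + 1) - A * q ^ (m + 1) * H m`, which `gollnitzH_add_two` expresses by `G`.
  linear_combination gollnitzG_add_two A B C q (n + 2)
    - A * q ^ (n + 3) * gollnitzG_add_two A B C q (n + 1)
    + gollnitzH_add_two A B C q (n + 1) + B * C * q ^ (n + 2) * gollnitzH_add_two A B C q n

lemma isSymmetricRecurrence_gollnitzH :
    IsSymmetricRecurrence (A * q + B + C) (A * q * B + B * C + C * (A * q)) (A * q * B * C) q
      (gollnitzH A B C q) := fun n ↦ by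
  -- Dually, the multiples of `gollnitzH_add_two` group the terms in `G` into the combinations that
  -- `gollnitzG_add_two` expresses by `H`.
  linear_combination gollnitzH_add_two A B C q (n + 2)
    - (B + C) * q ^ (n + 3) * gollnitzH_add_two A B C q (n + 1)
    + B * C * q ^ (2 * n + 5) * gollnitzH_add_two A B C q n
    + gollnitzG_add_two A B C q (n + 2)
    + A * (B + C) * q ^ (n + 3) * gollnitzG_add_two A B C q (n + 1)
    + A ^ 2 * B * C * q ^ (2 * n + 5) * gollnitzG_add_two A B C q n

lemma gollnitzG_rotate (n : ℕ) : gollnitzG A B C q n = gollnitzG B C A q n := by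
  have hB : IsSymmetricRecurrence (A + B + C) (A * B + B * C + C * A) (A * B * C) q
      (gollnitzG B C A q) := by
    convert isSymmetricRecurrence_gollnitzG B C A q using 1 <;> ring
  refine (isSymmetricRecurrence_gollnitzG A B C q).eq_of_initial_eq hB ?_ ?_ ?_ ?_ n <;>
    simp only [gollnitzG_zero, gollnitzG_one, gollnitzH_zero, gollnitzH_one, gollnitzG_add_two,
      gollnitzH_add_two, Nat.reduceAdd] <;>
    ring

lemma gollnitzH_eq_mul_gollnitzG (n : ℕ) :
    gollnitzH A B C q n = (1 + A) * gollnitzG (A * q) B C q n := by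
  refine (isSymmetricRecurrence_gollnitzH A B C q).eq_of_initial_eq
    ((isSymmetricRecurrence_gollnitzG (A * q) B C q).const_mul (1 + A)) ?_ ?_ ?_ ?_ n <;>
    simp only [gollnitzG_zero, gollnitzG_one, gollnitzH_zero, gollnitzH_one, gollnitzG_add_two,
      gollnitzH_add_two, Nat.reduceAdd] <;>
    ring

end GollnitzRecurrence

section Nilpotent

variable {R : Type*} [CommRing R] (A B C : R) {q : R} {M n : ℕ}

lemma gollnitzH_eq_gollnitzG (hq : q ^ M = 0) (hn : M < n) :
    gollnitzH A B C q n = gollnitzG A B C q n := by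
  obtain ⟨m, rfl⟩ : ∃ m, n = m + 1 := ⟨n - 1, by omega⟩
  have hw {r : ℕ} (hr : 6 ≤ r) : colorWeight A B C q (6 * m + r) = 0 := by
    rw [colorWeight_six_mul_add A B C q (by omega) (by omega) (by omega),
      pow_eq_zero_of_le (by omega) hq, mul_zero]
  calc gollnitzSum A B C q (6 * m + 8)
    _ = gollnitzSum A B C q (6 * m + 7) :=
      gollnitzSum_succ_of_colorWeight_eq_zero A B C q (hw (r := 8) (by simp))
    _ = gollnitzSum A B C q (6 * m + 6) :=
      gollnitzSum_succ_of_colorWeight_eq_zero A B C q (hw (r := 7) (by simp))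
    _ = gollnitzSum A B C q (6 * m + 5) :=
      gollnitzSum_succ_of_colorWeight_eq_zero A B C q (hw (r := 6) (by simp))

lemma gollnitzG_eq_prod_mul (hq : q ^ M = 0) (hn : M < n) :
    gollnitzG A B C q n = (∏ k ∈ range M, (1 + A * q ^ k)) * gollnitzG 0 B C q n := by
  have extract (K : ℕ) : gollnitzG A B C q n =
      (∏ k ∈ range K, (1 + A * q ^ k)) * gollnitzG (A * q ^ K) B C q n := by
    induction K with
    | zero => simp
    | succ K ih =>
      rw [ih, prod_range_succ, ← gollnitzH_eq_gollnitzG _ _ _ hq hn, gollnitzH_eq_mul_gollnitzG,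
        mul_assoc A, ← pow_succ, mul_assoc]
  rw [extract M, hq, mul_zero]

theorem gollnitzG_eq_prod (hq : q ^ M = 0) (hn : M < n) :
    gollnitzG A B C q n =
      ∏ k ∈ range M, (1 + A * q ^ k) * (1 + B * q ^ k) * (1 + C * q ^ k) := by
  have hzero : gollnitzG 0 0 0 q n = 1 := by
    rw [gollnitzG, gollnitzSum, colorWeight_zero, gappedSum_zero_weight]
  rw [gollnitzG_eq_prod_mul A B C hq hn, gollnitzG_rotate, gollnitzG_eq_prod_mul B C 0 hq hn,
    gollnitzG_rotate, gollnitzG_eq_prod_mul C 0 0 hq hn, hzero, mul_one, ← mul_assoc,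
    prod_mul_distrib, prod_mul_distrib]

end Nilpotent

section Counting

open Polynomial

lemma card_partition_nodup {n N : ℕ} (hn : n ≤ N) (P : Multiset ℕ → Prop) [DecidablePred P] :
    Fintype.card {p : n.Partition // p.parts.Nodup ∧ P p.parts} =
      #{s ∈ {s ∈ (Icc 1 N).powerset | P s.val} | ∑ i ∈ s, i = n} := by
  rw [← Fintype.card_coe]
  refine Fintype.card_congr
    { toFun := fun p ↦ ⟨⟨p.1.parts, p.2.1⟩, ?_⟩
      invFun := fun s ↦ ⟨⟨s.1.val, ?_, ?_⟩, s.1.nodup, ?_⟩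
      left_inv := fun _ ↦ rfl
      right_inv := fun _ ↦ rfl }
  · have hsum : ∑ i ∈ ⟨p.1.parts, p.2.1⟩, i = n := (sum_val _).symm.trans p.1.parts_sum
    have hsub : ⟨p.1.parts, p.2.1⟩ ⊆ Icc 1 N := fun i hi ↦
      mem_Icc.2 ⟨p.1.parts_pos hi, (p.1.le_of_mem_parts hi).trans hn⟩
    simp only [mem_filter, mem_powerset]
    exact ⟨⟨hsub, p.2.2⟩, hsum⟩
  · exact fun hi ↦ (mem_Icc.1 (mem_powerset.1 (mem_filter.1 (mem_filter.1 s.2).1).1 hi)).1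
  · exact (sum_val _).trans (mem_filter.1 s.2).2
  · exact (mem_filter.1 (mem_filter.1 s.2).1).2

lemma coeff_sum_X_pow {R ι : Type*} [Semiring R] (S : Finset ι) (size : ι → ℕ) (n : ℕ) :
    (∑ s ∈ S, (X : R[X]) ^ size s).coeff n = #{s ∈ S | size s = n} := by
  simp only [finsetSum_coeff, coeff_X_pow, sum_boole, eq_comm]

lemma card_filter_eq_of_sum_pow_eq {ι κ : Type*} {S : Finset ι} {T : Finset κ} {size : ι → ℕ}
    {size' : κ → ℕ} {n N : ℕ} (hn : n < N)
    (h : ∑ s ∈ S, AdjoinRoot.root (X ^ N : ℤ[X]) ^ size s =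
      ∑ t ∈ T, AdjoinRoot.root (X ^ N) ^ size' t) :
    #{s ∈ S | size s = n} = #{t ∈ T | size' t = n} := by
  simp only [← AdjoinRoot.mk_X, ← map_pow, ← map_sum] at h
  have hcoeff := X_pow_dvd_iff.1 (AdjoinRoot.mk_eq_mk.1 h) n hn
  rw [coeff_sub, coeff_sum_X_pow, coeff_sum_X_pow, sub_eq_zero] at hcoeff
  exact_mod_cast hcoeff

variable {R : Type*} [CommSemiring R] (x : R)

lemma prod_ite_pow (p : ℕ → Prop) [DecidablePred p] (s : Finset ℕ) :
    ∏ i ∈ s, (if p i then x ^ i else 0) = if ∀ i ∈ s, p i then x ^ ∑ i ∈ s, i else 0 := by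
  rw [prod_ite_zero, prod_pow_eq_pow_sum]

lemma gollnitzSum_pow (k : ℕ) :
    gollnitzSum (x ^ 2) (x ^ 4) (x ^ 5) (x ^ 6) k =
      ∑ s ∈ (Icc 1 k).powerset with (∀ i ∈ s, i ≠ 1 ∧ i ≠ 3) ∧ IsGapped minGap s,
        x ^ ∑ i ∈ s, i := by
  rw [← filter_filter, filter_comm, sum_filter, gollnitzSum, gappedSum]
  refine sum_congr rfl fun s hs ↦ ?_
  rw [← prod_ite_pow]
  refine prod_congr rfl fun i hi ↦ colorWeight_pow x ?_
  exact Nat.one_le_iff_ne_zero.1 (mem_Icc.1 (mem_powerset.1 (mem_filter.1 hs).1 hi)).1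

lemma prod_primary_eq_sum (M : ℕ) :
    ∏ k ∈ range M, (1 + x ^ (6 * k + 2)) * (1 + x ^ (6 * k + 4)) * (1 + x ^ (6 * k + 5)) =
      ∑ s ∈ (Icc 1 (6 * M)).powerset with ∀ i ∈ s, IsPrimary i, x ^ ∑ i ∈ s, i := by
  simp only [sum_filter, ← prod_ite_pow, ← prod_one_add]
  induction M with
  | zero => simp
  | succ M ih =>
    have hblock (f : ℕ → R) : ∏ i ∈ Icc 1 (6 * M + 6), f i = (∏ i ∈ Icc 1 (6 * M), f i) *
        (f (6 * M + 1) * f (6 * M + 2) * f (6 * M + 3) * f (6 * M + 4) * f (6 * M + 5) *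
          f (6 * M + 6)) := by
      simp [prod_Icc_succ_top, mul_assoc]
    rw [prod_range_succ, ih, Nat.mul_add_one, hblock]
    simp [IsPrimary]

theorem sum_primary_eq_sum_gapped {R : Type*} [CommRing R] {x : R} {M : ℕ} (hx : x ^ (6 * M) = 0) :
    ∑ s ∈ (Icc 1 (6 * M)).powerset with ∀ i ∈ s, IsPrimary i, x ^ ∑ i ∈ s, i =
      ∑ s ∈ (Icc 1 (6 * M + 5)).powerset with (∀ i ∈ s, i ≠ 1 ∧ i ≠ 3) ∧ IsGapped minGap s,
        x ^ ∑ i ∈ s, i := by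
  rw [← prod_primary_eq_sum, ← gollnitzSum_pow]
  refine .trans (prod_congr rfl fun k _ ↦ ?_) (gollnitzG_eq_prod (x ^ 2) (x ^ 4) (x ^ 5)
    (by rwa [← pow_mul]) M.lt_succ_self).symm
  ring

end Counting

end Gollnitz

/-- Göllnitz's 1967 partition theorem: the number of partitions of `n` into
distinct parts `≡ 2, 4, 5 (mod 6)` equals the number of partitions of `n`
into parts `≠ 1, 3` which pairwise differ by at least `6`, where a difference
of exactly `6` occurs only if the larger of the two parts is
`≡ 2, 4`, or `5 (mod 6)`. -/
theorem gollnitz_partition_theorem (n : ℕ) :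
    Fintype.card {p : n.Partition //
        p.parts.Nodup ∧ ∀ x ∈ p.parts, x % 6 = 2 ∨ x % 6 = 4 ∨ x % 6 = 5}
    = Fintype.card {p : n.Partition //
        p.parts.Nodup ∧ (∀ x ∈ p.parts, x ≠ 1 ∧ x ≠ 3) ∧
        ∀ x ∈ p.parts, ∀ y ∈ p.parts, x < y →
          6 ≤ y - x ∧ (y - x = 6 → y % 6 = 2 ∨ y % 6 = 4 ∨ y % 6 = 5)} := by
  have hn : n < 6 * (n + 1) := by omega
  have hgap (m : Multiset ℕ) : (∀ x ∈ m, ∀ y ∈ m, x < y →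
      6 ≤ y - x ∧ (y - x = 6 → y % 6 = 2 ∨ y % 6 = 4 ∨ y % 6 = 5)) ↔
      ∀ x ∈ m, ∀ y ∈ m, x < y → x + Gollnitz.minGap y ≤ y :=
    forall₂_congr fun x _ ↦ forall₃_congr fun y _ hxy ↦ (Gollnitz.add_minGap_le_iff hxy).symm
  simp only [hgap]
  rw [Gollnitz.card_partition_nodup hn.le
      (fun m ↦ ∀ x ∈ m, x % 6 = 2 ∨ x % 6 = 4 ∨ x % 6 = 5),
    Gollnitz.card_partition_nodup (hn.le.trans (Nat.le_add_right _ 5))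
      (fun m ↦ (∀ x ∈ m, x ≠ 1 ∧ x ≠ 3) ∧
        ∀ x ∈ m, ∀ y ∈ m, x < y → x + Gollnitz.minGap y ≤ y)]
  refine Gollnitz.card_filter_eq_of_sum_pow_eq hn (Gollnitz.sum_primary_eq_sum_gapped ?_)
  rw [← AdjoinRoot.mk_X, ← map_pow, AdjoinRoot.mk_self]
end
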